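/- Strong complementary information tradeoff for conjugate observables: for any pure tripartite state |ρ⟩^{ABE} with dim A = d, S(X^A|B)_ρ + S(Z^A|E)_ρ ≥ log₂ d, where X and Z are generalized Pauli observables on A with mutually unbiased eigenbases and the conditional entropies are of the states dephased on A in the respective eigenbases. -/

import Mathlib

open Matrix Kronecker ComplexOrder

noncomputable section

/-- ω = e^{2πi/d} -/
noncomputable def qomega (d : ℕ) : ℂ := Complex.exp (2 * Real.pi * Complex.I / d)

/-- Generalized Pauli Z: Z|k⟩ = ω^k |k⟩. -/
noncomputable def pauliZ (d : ℕ) : Matrix (Fin d) (Fin d) ℂ :=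
  Matrix.diagonal fun k : Fin d => qomega d ^ (k : ℕ)

/-- Generalized Pauli X: X|k⟩ = |k+1 mod d⟩. -/
noncomputable def pauliX (d : ℕ) [NeZero d] : Matrix (Fin d) (Fin d) ℂ :=
  Matrix.of fun i j : Fin d => if i = j + 1 then 1 else 0

/-- Fourier matrix: column j is |x̃_j⟩ = (1/√d) Σ_k ω^{jk} |k⟩. -/
noncomputable def fourierMat (d : ℕ) : Matrix (Fin d) (Fin d) ℂ :=
  Matrix.of fun k j : Fin d => qomega d ^ ((j : ℕ) * (k : ℕ)) / (Real.sqrt d : ℂ)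

/-- density operator predicate -/
def IsDensity {n : Type*} [Fintype n] (ρ : Matrix n n ℂ) : Prop :=
  ρ.PosSemidef ∧ ρ.trace = 1

/-- von Neumann entropy in base 2, via eigenvalues. -/
noncomputable def vN {n : Type*} [Fintype n] [DecidableEq n] (ρ : Matrix n n ℂ) : ℝ :=
  if h : ρ.IsHermitian then ∑ i, -(h.eigenvalues i * Real.logb 2 (h.eigenvalues i)) else 0

/-- complete dephasing in the standard basis -/
def dephase {n : Type*} [DecidableEq n] (M : Matrix n n ℂ) : Matrix n n ℂ :=
  Matrix.of fun i j => if i = j then M i j else 0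

/-- dephasing of the first (A) factor of a bipartite state, standard (Z eigen-) basis -/
def dephaseA {a b : Type*} [DecidableEq a] (M : Matrix (a × b) (a × b) ℂ) :
    Matrix (a × b) (a × b) ℂ :=
  Matrix.of fun p q => if p.1 = q.1 then M p q else 0

/-- dephasing of the first (A) factor in the Fourier (X eigen-) basis -/
noncomputable def dephaseXA (d : ℕ) {b : Type*} [Fintype b] [DecidableEq b]
    (M : Matrix (Fin d × b) (Fin d × b) ℂ) : Matrix (Fin d × b) (Fin d × b) ℂ :=
  (fourierMat d ⊗ₖ (1 : Matrix b b ℂ)) *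
    dephaseA ((fourierMat d ⊗ₖ (1 : Matrix b b ℂ))ᴴ * M * (fourierMat d ⊗ₖ (1 : Matrix b b ℂ))) *
    (fourierMat d ⊗ₖ (1 : Matrix b b ℂ))ᴴ

/-- reduced state on A of a bipartite state -/
def r2A {a b : Type*} [Fintype b] (M : Matrix (a × b) (a × b) ℂ) : Matrix a a ℂ :=
  Matrix.of fun i j => ∑ y : b, M (i, y) (j, y)

/-- reduced state on B of a bipartite state -/
def r2B {a b : Type*} [Fintype a] (M : Matrix (a × b) (a × b) ℂ) : Matrix b b ℂ :=
  Matrix.of fun i j => ∑ x : a, M (x, i) (x, j)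

/-- reduced state on AB of a tripartite state on A ⊗ B ⊗ E -/
def rAB {a b e : Type*} [Fintype e] (M : Matrix (a × b × e) (a × b × e) ℂ) :
    Matrix (a × b) (a × b) ℂ :=
  Matrix.of fun p q => ∑ x : e, M (p.1, p.2, x) (q.1, q.2, x)

/-- reduced state on AE of a tripartite state -/
def rAE {a b e : Type*} [Fintype b] (M : Matrix (a × b × e) (a × b × e) ℂ) :
    Matrix (a × e) (a × e) ℂ :=
  Matrix.of fun p q => ∑ y : b, M (p.1, y, p.2) (q.1, y, q.2)

/-- reduced state on A of a tripartite state -/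
def rA {a b e : Type*} [Fintype b] [Fintype e] (M : Matrix (a × b × e) (a × b × e) ℂ) :
    Matrix a a ℂ :=
  Matrix.of fun i j => ∑ y : b, ∑ x : e, M (i, y, x) (j, y, x)

/-- reduced state on B of a tripartite state -/
def rB {a b e : Type*} [Fintype a] [Fintype e] (M : Matrix (a × b × e) (a × b × e) ℂ) :
    Matrix b b ℂ :=
  Matrix.of fun i j => ∑ x : a, ∑ z : e, M (x, i, z) (x, j, z)

/-- reduced state on E of a tripartite state -/
def rE {a b e : Type*} [Fintype a] [Fintype b] (M : Matrix (a × b × e) (a × b × e) ℂ) :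
    Matrix e e ℂ :=
  Matrix.of fun i j => ∑ x : a, ∑ y : b, M (x, y, i) (x, y, j)

/-- matrix logarithm (base 2) of a Hermitian matrix via spectral decomposition -/
noncomputable def mlog {n : Type*} [Fintype n] [DecidableEq n] (M : Matrix n n ℂ) :
    Matrix n n ℂ :=
  if h : M.IsHermitian then
    (h.eigenvectorUnitary : Matrix n n ℂ) *
      Matrix.diagonal (fun i => (Real.logb 2 (h.eigenvalues i) : ℂ)) *
      (h.eigenvectorUnitary : Matrix n n ℂ)ᴴ
  else 0

/-- quantum relative entropy S(ρ‖σ) = Tr[ρ(log₂ρ − log₂σ)] -/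
noncomputable def relEnt {n : Type*} [Fintype n] [DecidableEq n] (ρ σ : Matrix n n ℂ) : ℝ :=
  ((ρ * (mlog ρ - mlog σ)).trace).re

/-- trace norm of a Hermitian matrix -/
noncomputable def traceNorm {n : Type*} [Fintype n] [DecidableEq n] (M : Matrix n n ℂ) : ℝ :=
  if h : M.IsHermitian then ∑ i, |h.eigenvalues i| else 0

/-!
Put `τ = ρ^{AE}`. On a pure state `S(B) = S(AE)`, and dephasing `A` in a fixed basis gives states of
equal entropy on `AB` and on `AE`, because the state of `B ⊗ E` left by each outcome is pure. For
the pinchings `P_U`, `P_W` of `A` in two bases with overlaps `|⟨w_i, u_j⟩|² ≤ c`, the claim becomes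
`S(P_U τ) - S(τ) ≥ S(τ_E) - S(P_W τ) - log₂ c`. The left side is the relative entropy
`D(τ ‖ P_U τ)`, which can only decrease to `D(P_W τ ‖ P_W P_U τ)` under `P_W`; the overlap bound
gives `P_W P_U τ ≤ c • (1 ⊗ τ_E)`, and `D` is antitone in its second argument.

Monotonicity under pinching rests on an integral formula in which `L_ρ` is multiplication by `ρ` on
the left and `R_σ` multiplication by `σ` on the right:
`log 2 * D(ρ ‖ σ) = ∫ s in 0..1, (⟨ρ, ((1 - s) L_ρ + s R_σ)⁻¹ ρ⟩ - tr ρ) / s`.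
The inverse quadratic form is a maximum over matrices `K` of an expression that compares under a
pinching `P` because `P(K) P(K)* ≤ P(K K*)`.

A hypothesis `ρ ≤ C • σ` says that the support of `ρ` lies in that of `σ`; otherwise `relEnt ρ σ`
is not the relative entropy, which is infinite, since `Real.logb 2 0 = 0`.
-/

open scoped MatrixOrder

section MatrixLog

variable {n m : Type*} [Fintype n] [DecidableEq n] [Fintype m] [DecidableEq m]

lemma conjTranspose_mul_eigenvectorUnitary {M : Matrix n n ℂ} (hM : M.IsHermitian) :
    (hM.eigenvectorUnitary.1)ᴴ * hM.eigenvectorUnitary.1 = 1 := by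
  rw [← star_eq_conjTranspose, Unitary.coe_star_mul_self]

lemma eigenvectorUnitary_mul_conjTranspose {M : Matrix n n ℂ} (hM : M.IsHermitian) :
    hM.eigenvectorUnitary.1 * (hM.eigenvectorUnitary.1)ᴴ = 1 :=
  mul_eq_one_comm.mp (conjTranspose_mul_eigenvectorUnitary hM)

lemma eigenvectorUnitary_mul_diagonal_mul_conjTranspose {M : Matrix n n ℂ} (hM : M.IsHermitian) :
    hM.eigenvectorUnitary.1 * diagonal (fun i ↦ (hM.eigenvalues i : ℂ)) *
      (hM.eigenvectorUnitary.1)ᴴ = M := by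
  have h := hM.spectral_theorem
  rw [Unitary.conjStarAlgAut_apply] at h
  exact h.symm

lemma mul_eigenvectorUnitary {M : Matrix n n ℂ} (hM : M.IsHermitian) :
    M * hM.eigenvectorUnitary.1 =
      hM.eigenvectorUnitary.1 * diagonal (fun i ↦ (hM.eigenvalues i : ℂ)) := by
  have h := congrArg (· * hM.eigenvectorUnitary.1)
    (eigenvectorUnitary_mul_diagonal_mul_conjTranspose hM)
  simpa only [Matrix.mul_assoc, conjTranspose_mul_eigenvectorUnitary, Matrix.mul_one]
    using h.symm

lemma conjTranspose_eigenvectorUnitary_mul {M : Matrix n n ℂ} (hM : M.IsHermitian) :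
    (hM.eigenvectorUnitary.1)ᴴ * M =
      diagonal (fun i ↦ (hM.eigenvalues i : ℂ)) * (hM.eigenvectorUnitary.1)ᴴ := by
  have h := congrArg ((hM.eigenvectorUnitary.1)ᴴ * ·)
    (eigenvectorUnitary_mul_diagonal_mul_conjTranspose hM)
  simpa only [← Matrix.mul_assoc, conjTranspose_mul_eigenvectorUnitary, Matrix.one_mul]
    using h.symm

lemma mlog_mul_eigenvectorUnitary {M : Matrix n n ℂ} (hM : M.IsHermitian) :
    mlog M * hM.eigenvectorUnitary.1 =
      hM.eigenvectorUnitary.1 * diagonal (fun i ↦ (Real.logb 2 (hM.eigenvalues i) : ℂ)) := by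
  rw [mlog, dif_pos hM, Matrix.mul_assoc, conjTranspose_mul_eigenvectorUnitary, Matrix.mul_one]

lemma conjTranspose_eigenvectorUnitary_mul_mlog {M : Matrix n n ℂ} (hM : M.IsHermitian) :
    (hM.eigenvectorUnitary.1)ᴴ * mlog M =
      diagonal (fun i ↦ (Real.logb 2 (hM.eigenvalues i) : ℂ)) * (hM.eigenvectorUnitary.1)ᴴ := by
  rw [mlog, dif_pos hM, ← Matrix.mul_assoc, ← Matrix.mul_assoc,
    conjTranspose_mul_eigenvectorUnitary, Matrix.one_mul]

lemma mlog_mul_of_mul_eq_mul_diagonal {M : Matrix n n ℂ} (hM : M.IsHermitian)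
    {V : Matrix n m ℂ} {x : m → ℝ} (h : M * V = V * diagonal (fun j ↦ (x j : ℂ))) :
    mlog M * V = V * diagonal (fun j ↦ (Real.logb 2 (x j) : ℂ)) := by
  set U := hM.eigenvectorUnitary.1 with hU
  have hT : diagonal (fun i ↦ (hM.eigenvalues i : ℂ)) * (Uᴴ * V) =
      Uᴴ * V * diagonal (fun j ↦ (x j : ℂ)) := by
    rw [← Matrix.mul_assoc, ← conjTranspose_eigenvectorUnitary_mul hM, Matrix.mul_assoc, h,
      Matrix.mul_assoc]
  have hlog : diagonal (fun i ↦ (Real.logb 2 (hM.eigenvalues i) : ℂ)) * (Uᴴ * V) =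
      Uᴴ * V * diagonal (fun j ↦ (Real.logb 2 (x j) : ℂ)) := by
    ext i j
    have hij := congrFun₂ hT i j
    rw [diagonal_mul, mul_diagonal, mul_comm, mul_eq_mul_left_iff, Complex.ofReal_inj] at hij
    rw [diagonal_mul, mul_diagonal]
    rcases hij with hij | hij
    · rw [hij, mul_comm]
    · rw [hij, mul_zero, zero_mul]
  calc mlog M * V
      = U * (diagonal (fun i ↦ (Real.logb 2 (hM.eigenvalues i) : ℂ)) * (Uᴴ * V)) := by
        rw [mlog, dif_pos hM, ← hU]
        simp only [Matrix.mul_assoc]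
    _ = V * diagonal (fun j ↦ (Real.logb 2 (x j) : ℂ)) := by
        rw [hlog, ← Matrix.mul_assoc, ← Matrix.mul_assoc, hU,
          eigenvectorUnitary_mul_conjTranspose, Matrix.one_mul]

theorem mlog_mul_of_mul_eq_mul {M : Matrix n n ℂ} {N : Matrix m m ℂ} (hM : M.IsHermitian)
    (hN : N.IsHermitian) {V : Matrix n m ℂ} (h : M * V = V * N) :
    mlog M * V = V * mlog N := by
  set W := hN.eigenvectorUnitary.1 with hW
  have hVW : mlog M * (V * W) = V * mlog N * W := by
    rw [Matrix.mul_assoc V, mlog_mul_eigenvectorUnitary hN, ← Matrix.mul_assoc V]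
    refine mlog_mul_of_mul_eq_mul_diagonal hM ?_
    rw [← Matrix.mul_assoc, h, Matrix.mul_assoc, mul_eigenvectorUnitary, ← Matrix.mul_assoc]
  calc mlog M * V = mlog M * (V * W) * Wᴴ := by
        rw [Matrix.mul_assoc, Matrix.mul_assoc, hW, eigenvectorUnitary_mul_conjTranspose,
          Matrix.mul_one]
    _ = V * mlog N := by
        rw [hVW, Matrix.mul_assoc, hW, eigenvectorUnitary_mul_conjTranspose, Matrix.mul_one]

lemma vN_eq_neg_re_trace_mul_mlog {M : Matrix n n ℂ} (hM : M.IsHermitian) :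
    vN M = -(M * mlog M).trace.re := by
  have h : (M * mlog M).trace =
      ∑ i, (hM.eigenvalues i : ℂ) * (Real.logb 2 (hM.eigenvalues i) : ℂ) := by
    rw [mlog, dif_pos hM, ← Matrix.mul_assoc, ← Matrix.mul_assoc, trace_mul_comm,
      mul_eigenvectorUnitary, ← Matrix.mul_assoc, ← Matrix.mul_assoc,
      conjTranspose_mul_eigenvectorUnitary, Matrix.one_mul, diagonal_mul_diagonal, trace_diagonal]
  rw [vN, dif_pos hM, h, Complex.re_sum, ← Finset.sum_neg_distrib]
  exact Finset.sum_congr rfl fun i _ ↦ by rw [← Complex.ofReal_mul, Complex.ofReal_re]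

theorem vN_mul_conjTranspose_self (A : Matrix n m ℂ) : vN (A * Aᴴ) = vN (Aᴴ * A) := by
  have h : mlog (A * Aᴴ) * A = A * mlog (Aᴴ * A) :=
    mlog_mul_of_mul_eq_mul (isHermitian_mul_conjTranspose_self A)
      (isHermitian_conjTranspose_mul_self A) (Matrix.mul_assoc A Aᴴ A)
  rw [vN_eq_neg_re_trace_mul_mlog (isHermitian_mul_conjTranspose_self A),
    vN_eq_neg_re_trace_mul_mlog (isHermitian_conjTranspose_mul_self A),
    Matrix.mul_assoc Aᴴ, ← h, ← Matrix.mul_assoc Aᴴ, trace_mul_comm (Aᴴ * mlog (A * Aᴴ)),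
    ← Matrix.mul_assoc]

lemma vN_transpose {M : Matrix n n ℂ} (hM : M.IsHermitian) : vN Mᵀ = vN M := by
  have h : hM.transpose.eigenvalues = hM.eigenvalues :=
    (hM.transpose.eigenvalues_eq_eigenvalues_iff hM).2 (charpoly_transpose M)
  rw [vN, vN, dif_pos hM, dif_pos hM.transpose, h]

end MatrixLog

section LogIntegral

lemma segment_pos {x y s : ℝ} (hx : 0 < x) (hy : 0 < y) (hs : s ∈ Set.uIcc (0 : ℝ) 1) :
    0 < (1 - s) * x + s * y := by
  rw [Set.uIcc_of_le zero_le_one] at hs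
  exact convex_Ioi (0 : ℝ) hx hy (sub_nonneg.2 hs.2) hs.1 (sub_add_cancel 1 s)

lemma continuousOn_div_segment {x y : ℝ} (hx : 0 < x) (hy : 0 < y) (c : ℝ) :
    ContinuousOn (fun s ↦ c / ((1 - s) * x + s * y)) (Set.uIcc (0 : ℝ) 1) :=
  continuousOn_const.div (by fun_prop) fun _ hs ↦ (segment_pos hx hy hs).ne'

lemma integral_sub_div_segment {x y : ℝ} (hx : 0 < x) (hy : 0 < y) :
    ∫ s in (0 : ℝ)..1, (x - y) / ((1 - s) * x + s * y) = Real.log x - Real.log y := by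
  have hderiv (s : ℝ) (hs : s ∈ Set.uIcc (0 : ℝ) 1) :
      HasDerivAt (fun s ↦ -Real.log ((1 - s) * x + s * y))
        ((x - y) / ((1 - s) * x + s * y)) s := by
    have h : HasDerivAt (fun s : ℝ ↦ (1 - s) * x + s * y) (-1 * x + 1 * y) s :=
      (((hasDerivAt_id s).const_sub 1).mul_const x).add ((hasDerivAt_id s).mul_const y)
    exact (h.log (segment_pos hx hy hs).ne').neg.congr_deriv (by ring)
  rw [intervalIntegral.integral_eq_sub_of_hasDerivAt hderiv
    (continuousOn_div_segment hx hy _).intervalIntegrable]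
  ring_nf

lemma intervalIntegrable_mul_sub_div_segment {w x y : ℝ} (hx : 0 ≤ x) (hy : 0 ≤ y)
    (h : y = 0 → w * x = 0) :
    IntervalIntegrable (fun s ↦ w * x * ((x - y) / ((1 - s) * x + s * y)))
      MeasureTheory.volume 0 1 := by
  by_cases h₀ : w * x = 0
  · simp only [h₀, zero_mul, intervalIntegrable_const]
  · exact ((continuousOn_div_segment (hx.lt_of_ne' (right_ne_zero_of_mul h₀))
      (hy.lt_of_ne' (mt h h₀)) _).intervalIntegrable).const_mul _

lemma integral_mul_sub_div_segment {w x y : ℝ} (hx : 0 ≤ x) (hy : 0 ≤ y)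
    (h : y = 0 → w * x = 0) :
    ∫ s in (0 : ℝ)..1, w * x * ((x - y) / ((1 - s) * x + s * y)) =
      w * x * (Real.log x - Real.log y) := by
  by_cases h₀ : w * x = 0
  · simp only [h₀, zero_mul, intervalIntegral.integral_zero]
  · rw [intervalIntegral.integral_const_mul, integral_sub_div_segment
      (hx.lt_of_ne' (right_ne_zero_of_mul h₀)) (hy.lt_of_ne' (mt h h₀))]

end LogIntegral

section RelativeEntropy

variable {n : Type*} [Fintype n] [DecidableEq n]

/-- The quadratic form `K ↦ 2 Re ⟨ρ, K⟩ - ⟨K, ((1 - s) L_ρ + s R_σ) K⟩` in the Hilbert–Schmidt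
inner product, where `L_ρ` and `R_σ` are left and right multiplication. -/
def dualForm {m : Type*} [Fintype m] (s : ℝ) (ρ σ K : Matrix m m ℂ) : ℝ :=
  2 * (ρ * K).trace.re - (1 - s) * (ρ * (K * Kᴴ)).trace.re - s * (σ * (Kᴴ * K)).trace.re

/-- The squared moduli of the inner products of the eigenvectors of `ρ` with those of `σ`. -/
def overlap {ρ σ : Matrix n n ℂ} (hρ : ρ.IsHermitian) (hσ : σ.IsHermitian) (i j : n) : ℝ :=
  Complex.normSq (((hρ.eigenvectorUnitary.1)ᴴ * hσ.eigenvectorUnitary.1) i j)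

lemma overlap_nonneg {ρ σ : Matrix n n ℂ} (hρ : ρ.IsHermitian) (hσ : σ.IsHermitian) (i j : n) :
    0 ≤ overlap hρ hσ i j :=
  Complex.normSq_nonneg _

/-- The value `⟨ρ, ((1 - s) L_ρ + s R_σ)⁻¹ ρ⟩` written in the eigenbases of `ρ` and `σ`, where
`L_ρ` and `R_σ` are left and right multiplication. -/
def resolventForm (s : ℝ) {ρ σ : Matrix n n ℂ} (hρ : ρ.IsHermitian) (hσ : σ.IsHermitian) : ℝ :=
  ∑ i, ∑ j, overlap hρ hσ i j *
    (hρ.eigenvalues i ^ 2 / ((1 - s) * hρ.eigenvalues i + s * hσ.eigenvalues j))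

lemma trace_mul_mul_conjTranspose_eq_sum {ρ : Matrix n n ℂ} (hρ : ρ.IsHermitian)
    {V : Matrix n n ℂ} (hV : V * Vᴴ = 1) (K L : Matrix n n ℂ) :
    (ρ * (K * Lᴴ)).trace = ∑ i, ∑ j, (hρ.eigenvalues i : ℂ) *
      (((hρ.eigenvectorUnitary.1)ᴴ * K * V) i j *
        star (((hρ.eigenvectorUnitary.1)ᴴ * L * V) i j)) := by
  set U := hρ.eigenvectorUnitary.1 with hU
  have h : (diagonal (fun i ↦ (hρ.eigenvalues i : ℂ)) * (Uᴴ * K * V * (Uᴴ * L * V)ᴴ)).trace =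
      (ρ * (K * Lᴴ)).trace := by
    have hKL : Uᴴ * K * V * (Uᴴ * L * V)ᴴ = Uᴴ * (K * Lᴴ) * U := by
      rw [conjTranspose_mul, conjTranspose_mul, conjTranspose_conjTranspose,
        Matrix.mul_assoc, ← Matrix.mul_assoc V, hV, Matrix.one_mul]
      simp only [Matrix.mul_assoc]
    rw [hKL, ← Matrix.mul_assoc, ← Matrix.mul_assoc, ← conjTranspose_eigenvectorUnitary_mul hρ,
      trace_mul_comm, ← Matrix.mul_assoc U, ← Matrix.mul_assoc U, hU,
      eigenvectorUnitary_mul_conjTranspose, Matrix.one_mul]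
  rw [← h, trace]
  refine Finset.sum_congr rfl fun i _ ↦ ?_
  rw [diag_apply, diagonal_mul, mul_apply, Finset.mul_sum]
  rfl

lemma re_trace_mul_mul_conjTranspose_self_eq_sum {ρ : Matrix n n ℂ} (hρ : ρ.IsHermitian)
    {V : Matrix n n ℂ} (hV : V * Vᴴ = 1) (K : Matrix n n ℂ) :
    (ρ * (K * Kᴴ)).trace.re = ∑ i, ∑ j, hρ.eigenvalues i *
      Complex.normSq (((hρ.eigenvectorUnitary.1)ᴴ * K * V) i j) := by
  simp only [trace_mul_mul_conjTranspose_eq_sum hρ hV, Complex.re_sum, ← starRingEnd_apply,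
    Complex.mul_conj, ← Complex.ofReal_mul, Complex.ofReal_re]

lemma sum_mul_overlap {ρ σ : Matrix n n ℂ} (hρ : ρ.IsHermitian) (hσ : σ.IsHermitian) :
    ∑ i, ∑ j, hρ.eigenvalues i * overlap hρ hσ i j = ρ.trace.re := by
  have h := re_trace_mul_mul_conjTranspose_self_eq_sum hρ
    (eigenvectorUnitary_mul_conjTranspose hσ) 1
  rw [conjTranspose_one, Matrix.mul_one, Matrix.mul_one, Matrix.mul_one] at h
  exact h.symm

lemma relEnt_eq_sum {ρ σ : Matrix n n ℂ} (hρ : ρ.IsHermitian) (hσ : σ.IsHermitian) :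
    relEnt ρ σ = ∑ i, ∑ j, overlap hρ hσ i j * hρ.eigenvalues i *
      (Real.logb 2 (hρ.eigenvalues i) - Real.logb 2 (hσ.eigenvalues j)) := by
  set U := hρ.eigenvectorUnitary.1 with hU
  set V := hσ.eigenvectorUnitary.1 with hV
  have h : Uᴴ * (mlog ρ - mlog σ) * V =
      diagonal (fun i ↦ (Real.logb 2 (hρ.eigenvalues i) : ℂ)) * (Uᴴ * V) -
        Uᴴ * V * diagonal (fun j ↦ (Real.logb 2 (hσ.eigenvalues j) : ℂ)) := by
    rw [Matrix.mul_sub, Matrix.sub_mul, conjTranspose_eigenvectorUnitary_mul_mlog hρ,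
      Matrix.mul_assoc Uᴴ (mlog σ), mlog_mul_eigenvectorUnitary hσ, Matrix.mul_assoc,
      Matrix.mul_assoc]
  rw [relEnt, ← Matrix.mul_one (mlog ρ - mlog σ), ← conjTranspose_one,
    trace_mul_mul_conjTranspose_eq_sum hρ (eigenvectorUnitary_mul_conjTranspose hσ),
    ← hU, ← hV, Complex.re_sum, h, Matrix.mul_one]
  refine Finset.sum_congr rfl fun i _ ↦ ?_
  rw [Complex.re_sum]
  refine Finset.sum_congr rfl fun j _ ↦ ?_
  rw [Matrix.sub_apply, diagonal_mul, mul_diagonal, mul_comm ((Uᴴ * V) i j) _, ← sub_mul, mul_assoc,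
    ← starRingEnd_apply, Complex.mul_conj, overlap, ← hU, ← hV]
  norm_cast
  ring

lemma dualForm_eq_sum (s : ℝ) {ρ σ : Matrix n n ℂ} (hρ : ρ.IsHermitian) (hσ : σ.IsHermitian)
    {K T : Matrix n n ℂ}
    (hT : (hρ.eigenvectorUnitary.1)ᴴ * K * hσ.eigenvectorUnitary.1 = T) :
    dualForm s ρ σ K = ∑ i, ∑ j, (2 * hρ.eigenvalues i *
        (T i j * star (((hρ.eigenvectorUnitary.1)ᴴ * hσ.eigenvectorUnitary.1) i j)).re -
      ((1 - s) * hρ.eigenvalues i + s * hσ.eigenvalues j) * Complex.normSq (T i j)) := by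
  have hρK : (ρ * K).trace.re = ∑ i, ∑ j, hρ.eigenvalues i *
      (T i j * star (((hρ.eigenvectorUnitary.1)ᴴ * hσ.eigenvectorUnitary.1) i j)).re := by
    have h := trace_mul_mul_conjTranspose_eq_sum hρ (eigenvectorUnitary_mul_conjTranspose hσ) K 1
    rw [conjTranspose_one, Matrix.mul_one, Matrix.mul_one] at h
    simp only [h, hT, Complex.re_sum, Complex.re_ofReal_mul]
  have hσK : (σ * (Kᴴ * K)).trace.re =
      ∑ i, ∑ j, hσ.eigenvalues j * Complex.normSq (T i j) := by
    have h := re_trace_mul_mul_conjTranspose_self_eq_sum hσ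
      (eigenvectorUnitary_mul_conjTranspose hρ) Kᴴ
    have hT' : (hσ.eigenvectorUnitary.1)ᴴ * Kᴴ * hρ.eigenvectorUnitary.1 = Tᴴ := by
      rw [← hT]
      simp only [conjTranspose_mul, conjTranspose_conjTranspose, Matrix.mul_assoc]
    rw [conjTranspose_conjTranspose, hT', Finset.sum_comm] at h
    simpa only [conjTranspose_apply, ← starRingEnd_apply, Complex.normSq_conj] using h
  rw [dualForm, hρK, re_trace_mul_mul_conjTranspose_self_eq_sum hρ
    (eigenvectorUnitary_mul_conjTranspose hσ), hσK, hT]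
  simp only [Finset.mul_sum, ← Finset.sum_sub_distrib]
  exact Finset.sum_congr rfl fun i _ ↦ Finset.sum_congr rfl fun j _ ↦ by ring

lemma two_mul_re_sub_mul_normSq_le {p r : ℝ} (hr : 0 ≤ r) (hp : r = 0 → p = 0) (z w : ℂ) :
    2 * p * (z * star w).re - r * Complex.normSq z ≤ Complex.normSq w * (p ^ 2 / r) := by
  rcases hr.eq_or_lt with hr | hr
  · simp [hp hr.symm, ← hr]
  · have h : Complex.normSq w * (p ^ 2 / r) - (2 * p * (z * star w).re - r * Complex.normSq z) =
        r * Complex.normSq (z - (p / r : ℝ) * w) := by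
      simp only [Complex.normSq_apply, Complex.sub_re, Complex.sub_im,
        Complex.im_ofReal_mul, Complex.mul_re, Complex.star_def, Complex.conj_re, Complex.conj_im,
        Complex.ofReal_re, Complex.ofReal_im]
      field_simp
      ring
    exact sub_nonneg.1 (h ▸ mul_nonneg hr.le (Complex.normSq_nonneg _))

lemma two_mul_re_sub_mul_normSq_eq (p r : ℝ) (w : ℂ) :
    2 * p * ((p / r : ℝ) * w * star w).re - r * Complex.normSq ((p / r : ℝ) * w) =
      Complex.normSq w * (p ^ 2 / r) := by
  rw [mul_assoc (Complex.ofReal _), ← starRingEnd_apply, Complex.mul_conj, Complex.normSq_mul,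
    Complex.normSq_ofReal, ← Complex.ofReal_mul, Complex.ofReal_re]
  rcases eq_or_ne r 0 with rfl | hr
  · simp
  · field_simp
    ring

theorem isGreatest_resolventForm {s : ℝ} (hs : s ∈ Set.Ioo (0 : ℝ) 1) {ρ σ : Matrix n n ℂ}
    (hρ : ρ.PosSemidef) (hσ : σ.PosSemidef) :
    IsGreatest (Set.range (dualForm s ρ σ)) (resolventForm s hρ.isHermitian hσ.isHermitian) := by
  set U := hρ.isHermitian.eigenvectorUnitary.1 with hU
  set V := hσ.isHermitian.eigenvectorUnitary.1 with hV
  set p := hρ.isHermitian.eigenvalues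
  set q := hσ.isHermitian.eigenvalues
  constructor
  · set T : Matrix n n ℂ :=
      of fun i j ↦ ((p i / ((1 - s) * p i + s * q j) : ℝ) : ℂ) * (Uᴴ * V) i j
    have hUTV : Uᴴ * (U * T * Vᴴ) * V = T := by
      rw [Matrix.mul_assoc U, ← Matrix.mul_assoc Uᴴ, hU, hV,
        conjTranspose_mul_eigenvectorUnitary, Matrix.one_mul, Matrix.mul_assoc,
        conjTranspose_mul_eigenvectorUnitary, Matrix.mul_one]
    refine ⟨U * T * Vᴴ, ?_⟩
    rw [dualForm_eq_sum s hρ.isHermitian hσ.isHermitian hUTV, resolventForm]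
    exact Finset.sum_congr rfl fun i _ ↦ Finset.sum_congr rfl fun j _ ↦
      two_mul_re_sub_mul_normSq_eq _ _ _
  · rintro _ ⟨K, rfl⟩
    rw [dualForm_eq_sum s hρ.isHermitian hσ.isHermitian rfl, resolventForm]
    refine Finset.sum_le_sum fun i _ ↦ Finset.sum_le_sum fun j _ ↦ ?_
    have hp : 0 ≤ (1 - s) * p i := mul_nonneg (sub_pos.2 hs.2).le (hρ.eigenvalues_nonneg i)
    have hq : 0 ≤ s * q j := mul_nonneg hs.1.le (hσ.eigenvalues_nonneg j)
    refine two_mul_re_sub_mul_normSq_le (add_nonneg hp hq) (fun h ↦ ?_) _ _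
    exact (mul_eq_zero.1 ((add_eq_zero_iff_of_nonneg hp hq).1 h).1).resolve_left
      (sub_pos.2 hs.2).ne'

end RelativeEntropy

lemma re_trace_mul_le_re_trace_mul {n : Type*} [Fintype n] {A B P : Matrix n n ℂ}
    (hP : P.PosSemidef) (h : A ≤ B) :
    (P * A).trace.re ≤ (P * B).trace.re := by
  classical
  obtain ⟨Q, rfl⟩ := CStarAlgebra.nonneg_iff_eq_star_mul_self.1 hP.nonneg
  have hnonneg := ((le_iff.1 h).mul_mul_conjTranspose_same Q).trace_nonneg
  rw [trace_mul_comm, ← Matrix.mul_assoc, Matrix.mul_sub, trace_sub] at hnonneg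
  have hre := (Complex.nonneg_iff.1 hnonneg).1
  rwa [Complex.sub_re, sub_nonneg] at hre

section RelativeEntropyMonotonicity

variable {n m : Type*} [Fintype n] [DecidableEq n] [Fintype m] [DecidableEq m]

lemma sum_overlap_mul_eigenvalues {ρ σ : Matrix n n ℂ} (hρ : ρ.IsHermitian)
    (hσ : σ.IsHermitian) (j : n) :
    ∑ i, overlap hρ hσ i j * hρ.eigenvalues i =
      (((hσ.eigenvectorUnitary.1)ᴴ * ρ * hσ.eigenvectorUnitary.1) j j).re := by
  set U := hρ.eigenvectorUnitary.1 with hU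
  set V := hσ.eigenvectorUnitary.1
  have h : Vᴴ * ρ * V = Vᴴ * U * (diagonal (fun i ↦ (hρ.eigenvalues i : ℂ)) * (Uᴴ * V)) := by
    rw [← Matrix.mul_assoc (diagonal _), hU, ← conjTranspose_eigenvectorUnitary_mul hρ,
      ← Matrix.mul_assoc, ← Matrix.mul_assoc, Matrix.mul_assoc Vᴴ _ (_)ᴴ,
      eigenvectorUnitary_mul_conjTranspose, Matrix.mul_one]
  have hVU (i : n) : (Vᴴ * U) j i = star ((Uᴴ * V) i j) := by
    rw [← conjTranspose_apply, conjTranspose_mul, conjTranspose_conjTranspose]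
  rw [h, mul_apply, Complex.re_sum]
  refine Finset.sum_congr rfl fun i _ ↦ ?_
  rw [diagonal_mul, hVU, mul_left_comm, mul_comm (star _), ← starRingEnd_apply,
    Complex.mul_conj, overlap, ← Complex.ofReal_mul, Complex.ofReal_re, mul_comm]

lemma eigenvector_conj_apply_self_eq_zero {ρ σ : Matrix n n ℂ} (hρ : ρ.PosSemidef)
    (hσ : σ.IsHermitian) {C : ℝ} (h : ρ ≤ C • σ) {j : n} (hj : hσ.eigenvalues j = 0) :
    (((hσ.eigenvectorUnitary.1)ᴴ * ρ * hσ.eigenvectorUnitary.1) j j).re = 0 := by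
  set V := hσ.eigenvectorUnitary.1
  have hσj : (Vᴴ * σ * V) j j = 0 := by
    rw [Matrix.mul_assoc, mul_eigenvectorUnitary hσ, ← Matrix.mul_assoc,
      conjTranspose_mul_eigenvectorUnitary, Matrix.one_mul, diagonal_apply_eq, hj,
      Complex.ofReal_zero]
  have hle := ((le_iff.1 h).conjTranspose_mul_mul_same V).diag_nonneg (i := j)
  have hge := (hρ.conjTranspose_mul_mul_same V).diag_nonneg (i := j)
  rw [Matrix.mul_sub, Matrix.sub_mul, Matrix.mul_smul, Matrix.smul_mul, Matrix.sub_apply,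
    Matrix.smul_apply, hσj, smul_zero, zero_sub] at hle
  have hle' := (Complex.nonneg_iff.1 hle).1
  rw [Complex.neg_re] at hle'
  exact le_antisymm (neg_nonneg.1 hle') (Complex.nonneg_iff.1 hge).1

lemma overlap_mul_eigenvalues_eq_zero {ρ σ : Matrix n n ℂ} (hρ : ρ.PosSemidef)
    (hσ : σ.IsHermitian) {C : ℝ} (h : ρ ≤ C • σ) {j : n} (hj : hσ.eigenvalues j = 0) (i : n) :
    overlap hρ.isHermitian hσ i j * hρ.isHermitian.eigenvalues i = 0 := by
  have hsum := eigenvector_conj_apply_self_eq_zero hρ hσ h hj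
  rw [← sum_overlap_mul_eigenvalues hρ.isHermitian, Finset.sum_eq_zero_iff_of_nonneg
    fun k _ ↦ mul_nonneg (overlap_nonneg _ _ k j) (hρ.eigenvalues_nonneg k)] at hsum
  exact hsum i (Finset.mem_univ i)

lemma resolventForm_sub_trace_div {s : ℝ} (hs : s ∈ Set.Ioo (0 : ℝ) 1) {ρ σ : Matrix n n ℂ}
    (hρ : ρ.PosSemidef) (hσ : σ.PosSemidef) :
    (resolventForm s hρ.isHermitian hσ.isHermitian - ρ.trace.re) / s =
      ∑ i, ∑ j, overlap hρ.isHermitian hσ.isHermitian i j * hρ.isHermitian.eigenvalues i *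
        ((hρ.isHermitian.eigenvalues i - hσ.isHermitian.eigenvalues j) /
          ((1 - s) * hρ.isHermitian.eigenvalues i + s * hσ.isHermitian.eigenvalues j)) := by
  rw [← sum_mul_overlap hρ.isHermitian hσ.isHermitian, resolventForm, ← Finset.sum_sub_distrib,
    Finset.sum_div]
  refine Finset.sum_congr rfl fun i _ ↦ ?_
  rw [← Finset.sum_sub_distrib, Finset.sum_div]
  refine Finset.sum_congr rfl fun j _ ↦ ?_
  have hp := hρ.eigenvalues_nonneg i
  have hq := hσ.eigenvalues_nonneg j
  generalize hρ.isHermitian.eigenvalues i = p at hp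
  generalize hσ.isHermitian.eigenvalues j = q at hq
  rcases hp.eq_or_lt with rfl | hp
  · simp
  · have hD : 0 < (1 - s) * p + s * q :=
      add_pos_of_pos_of_nonneg (mul_pos (sub_pos.2 hs.2) hp) (mul_nonneg hs.1.le hq)
    have hsq : s * q = ((1 - s) * p + s * q) - (1 - s) * p := by ring
    generalize (1 - s) * p + s * q = D at hD hsq
    rw [div_eq_iff hs.1.ne']
    field_simp
    linear_combination (overlap hρ.isHermitian hσ.isHermitian i j) * hsq

lemma intervalIntegrable_resolventForm_sub_trace_div {ρ σ : Matrix n n ℂ} (hρ : ρ.PosSemidef)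
    (hσ : σ.PosSemidef) {C : ℝ} (h : ρ ≤ C • σ) :
    IntervalIntegrable
      (fun s ↦ (resolventForm s hρ.isHermitian hσ.isHermitian - ρ.trace.re) / s)
      MeasureTheory.volume 0 1 := by
  refine IntervalIntegrable.congr_uIoo (IntervalIntegrable.sum Finset.univ fun i _ ↦
    IntervalIntegrable.sum Finset.univ fun j _ ↦ intervalIntegrable_mul_sub_div_segment
      (hρ.eigenvalues_nonneg i) (hσ.eigenvalues_nonneg j) fun hj ↦
        overlap_mul_eigenvalues_eq_zero hρ hσ.isHermitian h hj i) fun s hs ↦ ?_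
  rw [Set.uIoo_of_le zero_le_one] at hs
  simp only [Finset.sum_apply, resolventForm_sub_trace_div hs hρ hσ]

theorem integral_resolventForm_sub_trace_div {ρ σ : Matrix n n ℂ} (hρ : ρ.PosSemidef)
    (hσ : σ.PosSemidef) {C : ℝ} (h : ρ ≤ C • σ) :
    ∫ s in (0 : ℝ)..1, (resolventForm s hρ.isHermitian hσ.isHermitian - ρ.trace.re) / s =
      Real.log 2 * relEnt ρ σ := by
  have hterm (i j : n) := intervalIntegrable_mul_sub_div_segment (hρ.eigenvalues_nonneg i)
    (hσ.eigenvalues_nonneg j) fun hj ↦ overlap_mul_eigenvalues_eq_zero hρ hσ.isHermitian h hj i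
  have hrow (i : n) := IntervalIntegrable.sum Finset.univ fun j _ ↦ hterm i j
  simp only [Finset.sum_fn] at hrow
  rw [intervalIntegral.integral_congr_Ioo_of_le zero_le_one
    fun s hs ↦ resolventForm_sub_trace_div hs hρ hσ,
    intervalIntegral.integral_finsetSum fun i _ ↦ hrow i,
    relEnt_eq_sum hρ.isHermitian hσ.isHermitian, Finset.mul_sum]
  refine Finset.sum_congr rfl fun i _ ↦ ?_
  rw [intervalIntegral.integral_finsetSum fun j _ ↦ hterm i j, Finset.mul_sum]
  refine Finset.sum_congr rfl fun j _ ↦ ?_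
  rw [integral_mul_sub_div_segment (hρ.eigenvalues_nonneg i) (hσ.eigenvalues_nonneg j)
    fun hj ↦ overlap_mul_eigenvalues_eq_zero hρ hσ.isHermitian h hj i, Real.logb, Real.logb]
  field_simp [Real.log_pos one_lt_two |>.ne']

theorem relEnt_le_of_forall_dualForm_le {ρ σ : Matrix n n ℂ} {ρ' σ' : Matrix m m ℂ}
    (hρ : ρ.PosSemidef) (hσ : σ.PosSemidef) (hρ' : ρ'.PosSemidef) (hσ' : σ'.PosSemidef)
    {C C' : ℝ} (h : ρ ≤ C • σ) (h' : ρ' ≤ C' • σ') (htrace : ρ'.trace = ρ.trace)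
    (hle : ∀ s ∈ Set.Ioo (0 : ℝ) 1, ∀ K, ∃ L, dualForm s ρ' σ' K ≤ dualForm s ρ σ L) :
    relEnt ρ' σ' ≤ relEnt ρ σ := by
  refine le_of_mul_le_mul_left ?_ (Real.log_pos one_lt_two)
  rw [← integral_resolventForm_sub_trace_div hρ hσ h,
    ← integral_resolventForm_sub_trace_div hρ' hσ' h', htrace]
  refine intervalIntegral.integral_mono_on_of_le_Ioo zero_le_one
    (htrace ▸ intervalIntegrable_resolventForm_sub_trace_div hρ' hσ' h')
    (intervalIntegrable_resolventForm_sub_trace_div hρ hσ h) fun s hs ↦ ?_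
  obtain ⟨K, hK⟩ := (isGreatest_resolventForm hs hρ' hσ').1
  obtain ⟨L, hL⟩ := hle s hs K
  have hLe := (isGreatest_resolventForm hs hρ hσ).2 ⟨L, rfl⟩
  exact div_le_div_of_nonneg_right (sub_le_sub_right (hK ▸ hL.trans hLe) _) hs.1.le

theorem relEnt_anti_right {ρ σ σ' : Matrix n n ℂ} (hρ : ρ.PosSemidef) (hσ : σ.PosSemidef)
    {C : ℝ} (hC : 0 ≤ C) (h : ρ ≤ C • σ) (hle : σ ≤ σ') : relEnt ρ σ' ≤ relEnt ρ σ := by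
  have hσ' : σ'.PosSemidef := nonneg_iff_posSemidef.1 (hσ.nonneg.trans hle)
  refine relEnt_le_of_forall_dualForm_le hρ hσ hρ hσ' h
    (h.trans (smul_le_smul_of_nonneg_left hle hC)) rfl fun s hs K ↦ ⟨K, ?_⟩
  have htr := re_trace_mul_le_re_trace_mul (posSemidef_conjTranspose_mul_self K) hle
  rw [trace_mul_comm, trace_mul_comm _ σ'] at htr
  exact sub_le_sub_left (mul_le_mul_of_nonneg_left htr hs.1.le) _

lemma re_trace_mul_mlog (ρ : Matrix n n ℂ) {M V : Matrix n n ℂ} (hM : M.IsHermitian)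
    (hV : V * Vᴴ = 1) {x : n → ℝ} (h : M * V = V * diagonal (fun j ↦ (x j : ℂ))) :
    (ρ * mlog M).trace.re = ∑ j, ((Vᴴ * ρ * V) j j).re * Real.logb 2 (x j) := by
  have htr : (ρ * mlog M).trace =
      (Vᴴ * ρ * V * diagonal (fun j ↦ (Real.logb 2 (x j) : ℂ))).trace := by
    rw [Matrix.mul_assoc, ← mlog_mul_of_mul_eq_mul_diagonal hM h, Matrix.mul_assoc,
      trace_mul_comm Vᴴ, ← Matrix.mul_assoc ρ, Matrix.mul_assoc _ V, hV, Matrix.mul_one]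
  rw [htr, trace, Complex.re_sum]
  exact Finset.sum_congr rfl fun j _ ↦ by
    rw [diag_apply, mul_diagonal, mul_comm, Complex.re_ofReal_mul, mul_comm]

theorem relEnt_smul_right {ρ σ : Matrix n n ℂ} (hρ : ρ.PosSemidef) (hσ : σ.IsHermitian)
    {C : ℝ} (h : ρ ≤ C • σ) {c : ℝ} (hc : 0 < c) :
    relEnt ρ (c • σ) = relEnt ρ σ - ρ.trace.re * Real.logb 2 c := by
  set V := hσ.eigenvectorUnitary.1 with hV
  have hVV : V * Vᴴ = 1 := eigenvectorUnitary_mul_conjTranspose hσ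
  have hcσ : (c • σ) * V = V * diagonal (fun j ↦ ((c * hσ.eigenvalues j : ℝ) : ℂ)) := by
    rw [Matrix.smul_mul, hV, mul_eigenvectorUnitary hσ, ← Matrix.mul_smul, ← diagonal_smul]
    congr 2
    funext j
    simp
  have htr : ρ.trace.re = ∑ j, ((Vᴴ * ρ * V) j j).re := by
    have hconj : (Vᴴ * ρ * V).trace = ρ.trace := by
      rw [trace_mul_comm, ← Matrix.mul_assoc, hVV, Matrix.one_mul]
    rw [← hconj, trace, Complex.re_sum]
    rfl
  rw [relEnt, relEnt, Matrix.mul_sub, Matrix.mul_sub, trace_sub, trace_sub, Complex.sub_re,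
    Complex.sub_re, re_trace_mul_mlog ρ (hσ.smul (IsSelfAdjoint.all c)) hVV hcσ,
    re_trace_mul_mlog ρ hσ hVV (mul_eigenvectorUnitary hσ), htr, sub_sub, Finset.sum_mul,
    ← Finset.sum_add_distrib]
  refine congrArg _ (Finset.sum_congr rfl fun j _ ↦ ?_)
  rcases eq_or_ne (hσ.eigenvalues j) 0 with hj | hj
  · simp only [hV, eigenvector_conj_apply_self_eq_zero hρ hσ h hj, zero_mul, add_zero]
  · rw [Real.logb_mul hc.ne' hj]
    ring

end RelativeEntropyMonotonicity

section Pinching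

variable {ι n m : Type*} [Fintype ι] [Fintype m]

/-- The block-diagonal matrix acting as `A i` on the range of the isometry `V i`. -/
def blockSum (V : ι → Matrix n m ℂ) (A : ι → Matrix m m ℂ) : Matrix n n ℂ :=
  ∑ i, V i * A i * (V i)ᴴ

lemma conjTranspose_blockSum (V : ι → Matrix n m ℂ) (A : ι → Matrix m m ℂ) :
    (blockSum V A)ᴴ = blockSum V fun i ↦ (A i)ᴴ := by
  simp only [blockSum, conjTranspose_sum, conjTranspose_mul, conjTranspose_conjTranspose,
    Matrix.mul_assoc]

lemma isHermitian_blockSum (V : ι → Matrix n m ℂ) {A : ι → Matrix m m ℂ}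
    (hA : ∀ i, (A i).IsHermitian) : (blockSum V A).IsHermitian :=
  (conjTranspose_blockSum V A).trans (congrArg _ (funext hA))

lemma blockSum_mono [Finite n] (V : ι → Matrix n m ℂ) {A B : ι → Matrix m m ℂ}
    (h : ∀ i, A i ≤ B i) : blockSum V A ≤ blockSum V B := by
  refine Finset.sum_le_sum fun i _ ↦ le_iff.2 ?_
  rw [← Matrix.sub_mul, ← Matrix.mul_sub]
  exact (le_iff.1 (h i)).mul_mul_conjTranspose_same (V i)

variable [Fintype n]

/-- The state after the projective measurement given by `V`, with the outcome forgotten. -/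
def pinch (V : ι → Matrix n m ℂ) (M : Matrix n n ℂ) : Matrix n n ℂ :=
  blockSum V fun i ↦ (V i)ᴴ * M * V i

lemma conjTranspose_pinch (V : ι → Matrix n m ℂ) (M : Matrix n n ℂ) :
    (pinch V M)ᴴ = pinch V Mᴴ := by
  simp only [pinch, conjTranspose_blockSum, conjTranspose_mul, conjTranspose_conjTranspose,
    Matrix.mul_assoc]

lemma pinch_mono (V : ι → Matrix n m ℂ) : Monotone (pinch V) := fun M N h ↦
  blockSum_mono V fun i ↦ le_iff.2 <| by
    rw [← Matrix.sub_mul, ← Matrix.mul_sub]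
    exact (le_iff.1 h).conjTranspose_mul_mul_same (V i)

lemma pinch_smul (V : ι → Matrix n m ℂ) (c : ℝ) (M : Matrix n n ℂ) :
    pinch V (c • M) = c • pinch V M := by
  simp only [pinch, blockSum, Matrix.mul_smul, Matrix.smul_mul, Finset.smul_sum]

lemma posSemidef_pinch (V : ι → Matrix n m ℂ) {M : Matrix n n ℂ} (hM : M.PosSemidef) :
    (pinch V M).PosSemidef := by
  have h := pinch_mono V hM.nonneg
  rw [← zero_smul ℝ (0 : Matrix n n ℂ), pinch_smul, zero_smul] at h
  exact nonneg_iff_posSemidef.1 h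

lemma trace_mul_blockSum (V : ι → Matrix n m ℂ) (M : Matrix n n ℂ) (A : ι → Matrix m m ℂ) :
    (M * blockSum V A).trace = ∑ i, ((V i)ᴴ * M * V i * A i).trace := by
  rw [blockSum, Finset.mul_sum, trace_sum]
  refine Finset.sum_congr rfl fun i _ ↦ ?_
  rw [← Matrix.mul_assoc, trace_mul_comm, ← Matrix.mul_assoc, ← Matrix.mul_assoc]

lemma trace_pinch_mul (V : ι → Matrix n m ℂ) (M K : Matrix n n ℂ) :
    (pinch V M * K).trace = (M * pinch V K).trace := by
  rw [pinch, pinch, trace_mul_comm, trace_mul_blockSum, trace_mul_blockSum]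
  exact Finset.sum_congr rfl fun i _ ↦ trace_mul_comm _ _

variable [DecidableEq n] [DecidableEq m]

/-- A family of isometries with pairwise orthogonal ranges that together fill the space, i.e. a
projective measurement whose outcome spaces are all identified with `m`. -/
structure IsIsometricResolution (V : ι → Matrix n m ℂ) : Prop where
  conjTranspose_mul_self (i : ι) : (V i)ᴴ * V i = 1
  conjTranspose_mul_of_ne {i j : ι} : i ≠ j → (V i)ᴴ * V j = 0
  sum_mul_conjTranspose : ∑ i, V i * (V i)ᴴ = 1

namespace IsIsometricResolution

variable {V : ι → Matrix n m ℂ} (hV : IsIsometricResolution V)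
include hV

lemma blockSum_mul (A : ι → Matrix m m ℂ) (i : ι) : blockSum V A * V i = V i * A i := by
  rw [blockSum, Matrix.sum_mul, Finset.sum_eq_single i]
  · rw [Matrix.mul_assoc, hV.conjTranspose_mul_self, Matrix.mul_one]
  · intro j _ hj
    rw [Matrix.mul_assoc, hV.conjTranspose_mul_of_ne hj, Matrix.mul_zero]
  · exact fun h ↦ absurd (Finset.mem_univ i) h

lemma conjTranspose_mul_blockSum_mul (A : ι → Matrix m m ℂ) (i : ι) :
    (V i)ᴴ * blockSum V A * V i = A i := by
  rw [Matrix.mul_assoc, hV.blockSum_mul, ← Matrix.mul_assoc, hV.conjTranspose_mul_self,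
    Matrix.one_mul]

lemma blockSum_mul_blockSum (A B : ι → Matrix m m ℂ) :
    blockSum V A * blockSum V B = blockSum V fun i ↦ A i * B i := by
  change blockSum V A * ∑ i, V i * B i * (V i)ᴴ = ∑ i, V i * (A i * B i) * (V i)ᴴ
  rw [Finset.mul_sum]
  refine Finset.sum_congr rfl fun i _ ↦ ?_
  rw [← Matrix.mul_assoc, ← Matrix.mul_assoc, hV.blockSum_mul, Matrix.mul_assoc (V i)]

lemma pinch_one : pinch V 1 = 1 := by
  simp only [pinch, blockSum, Matrix.mul_one, hV.conjTranspose_mul_self, hV.sum_mul_conjTranspose]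

lemma trace_pinch (M : Matrix n n ℂ) : (pinch V M).trace = M.trace := by
  rw [← Matrix.mul_one (pinch V M), trace_pinch_mul, hV.pinch_one, Matrix.mul_one]

lemma mlog_blockSum {A : ι → Matrix m m ℂ} (hA : ∀ i, (A i).IsHermitian) :
    mlog (blockSum V A) = blockSum V fun i ↦ mlog (A i) := by
  rw [← Matrix.mul_one (mlog (blockSum V A)), ← hV.sum_mul_conjTranspose, Finset.mul_sum]
  refine Finset.sum_congr rfl fun i _ ↦ ?_
  rw [← Matrix.mul_assoc, mlog_mul_of_mul_eq_mul (isHermitian_blockSum V hA) (hA i)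
    (hV.blockSum_mul A i)]

lemma vN_blockSum {A : ι → Matrix m m ℂ} (hA : ∀ i, (A i).IsHermitian) :
    vN (blockSum V A) = ∑ i, vN (A i) := by
  rw [vN_eq_neg_re_trace_mul_mlog (isHermitian_blockSum V hA), hV.mlog_blockSum hA,
    trace_mul_blockSum, Complex.re_sum, ← Finset.sum_neg_distrib]
  exact Finset.sum_congr rfl fun i _ ↦ by
    rw [hV.conjTranspose_mul_blockSum_mul, vN_eq_neg_re_trace_mul_mlog (hA i)]

lemma trace_pinch_mul_blockSum (M : Matrix n n ℂ) (A : ι → Matrix m m ℂ) :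
    (pinch V M * blockSum V A).trace = (M * blockSum V A).trace := by
  rw [trace_pinch_mul, pinch]
  simp only [hV.conjTranspose_mul_blockSum_mul]

lemma relEnt_self_pinch {ρ : Matrix n n ℂ} (hρ : ρ.IsHermitian) :
    relEnt ρ (pinch V ρ) = vN (pinch V ρ) - vN ρ := by
  have hA (i : ι) : ((V i)ᴴ * ρ * V i).IsHermitian := isHermitian_conjTranspose_mul_mul _ hρ
  have hpinch : (pinch V ρ).IsHermitian := isHermitian_blockSum V hA
  have hlog : (pinch V ρ * mlog (pinch V ρ)).trace = (ρ * mlog (pinch V ρ)).trace := by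
    conv_lhs => rw [pinch, hV.mlog_blockSum hA]
    conv_rhs => rw [pinch, hV.mlog_blockSum hA]
    exact hV.trace_pinch_mul_blockSum ρ _
  rw [vN_eq_neg_re_trace_mul_mlog hρ, vN_eq_neg_re_trace_mul_mlog hpinch, hlog, relEnt,
    Matrix.mul_sub, trace_sub, Complex.sub_re]
  ring

lemma pinch_mul_conjTranspose_le (K : Matrix n n ℂ) :
    pinch V K * (pinch V K)ᴴ ≤ pinch V (K * Kᴴ) := by
  rw [conjTranspose_pinch, pinch, pinch, hV.blockSum_mul_blockSum]
  refine blockSum_mono V fun i ↦ ?_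
  have hle : V i * (V i)ᴴ ≤ 1 := by
    rw [← hV.sum_mul_conjTranspose]
    exact Finset.single_le_sum (f := fun j ↦ V j * (V j)ᴴ)
      (fun j _ ↦ (posSemidef_self_mul_conjTranspose (V j)).nonneg) (Finset.mem_univ i)
  have h := (le_iff.1 hle).mul_mul_conjTranspose_same ((V i)ᴴ * K)
  rw [Matrix.mul_sub, Matrix.sub_mul, ← le_iff] at h
  simpa only [conjTranspose_mul, conjTranspose_conjTranspose, Matrix.mul_assoc, Matrix.mul_one,
    Matrix.one_mul] using h

lemma dualForm_pinch_le {s : ℝ} (hs : s ∈ Set.Ioo (0 : ℝ) 1) {ρ σ : Matrix n n ℂ}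
    (hρ : ρ.PosSemidef) (hσ : σ.PosSemidef) (K : Matrix n n ℂ) :
    dualForm s (pinch V ρ) (pinch V σ) K ≤ dualForm s ρ σ (pinch V K) := by
  have hρK := re_trace_mul_le_re_trace_mul hρ (hV.pinch_mul_conjTranspose_le K)
  have hσK := re_trace_mul_le_re_trace_mul hσ (hV.pinch_mul_conjTranspose_le Kᴴ)
  rw [← conjTranspose_pinch, conjTranspose_conjTranspose, conjTranspose_conjTranspose] at hσK
  rw [dualForm, dualForm, trace_pinch_mul, trace_pinch_mul, trace_pinch_mul]
  exact sub_le_sub (sub_le_sub_left (mul_le_mul_of_nonneg_left hρK (sub_pos.2 hs.2).le) _)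
    (mul_le_mul_of_nonneg_left hσK hs.1.le)

theorem relEnt_pinch_le {ρ σ : Matrix n n ℂ} (hρ : ρ.PosSemidef) (hσ : σ.PosSemidef) {C : ℝ}
    (h : ρ ≤ C • σ) : relEnt (pinch V ρ) (pinch V σ) ≤ relEnt ρ σ := by
  have hpinch : pinch V ρ ≤ C • pinch V σ := by
    rw [← pinch_smul]
    exact pinch_mono V h
  exact relEnt_le_of_forall_dualForm_le hρ hσ (posSemidef_pinch V hρ) (posSemidef_pinch V hσ) h
    hpinch (hV.trace_pinch ρ)
    fun _ hs K ↦ ⟨pinch V K, hV.dualForm_pinch_le hs hρ hσ K⟩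

theorem le_card_smul_pinch {ρ : Matrix n n ℂ} (hρ : ρ.PosSemidef) :
    ρ ≤ (Fintype.card ι : ℝ) • pinch V ρ := by
  set P : ι → Matrix n n ℂ := fun i ↦ V i * (V i)ᴴ with hP
  have hPsum : ∑ i, P i = 1 := hV.sum_mul_conjTranspose
  have hpinch : ∑ i, P i * ρ * P i = pinch V ρ := by
    simp only [hP, pinch, blockSum, Matrix.mul_assoc]
  have hnonneg : 0 ≤ ∑ i, ∑ j, (P i - P j) * ρ * (P i - P j) := by
    refine Finset.sum_nonneg fun i _ ↦ Finset.sum_nonneg fun j _ ↦ ?_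
    have hPij : (P i - P j)ᴴ = P i - P j := by
      simp only [hP, conjTranspose_sub, conjTranspose_mul, conjTranspose_conjTranspose]
    have h := hρ.mul_mul_conjTranspose_same (P i - P j)
    rw [hPij] at h
    exact h.nonneg
  have hsum : ∑ i, ∑ j, (P i - P j) * ρ * (P i - P j) =
      (2 : ℝ) • ((Fintype.card ι : ℝ) • pinch V ρ - ρ) := by
    simp only [Matrix.sub_mul, Matrix.mul_sub, Finset.sum_sub_distrib, ← Finset.mul_sum,
      ← Finset.sum_mul, hPsum, Matrix.mul_one, Matrix.one_mul, Finset.sum_const,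
      Finset.card_univ, hpinch, ← Nat.cast_smul_eq_nsmul ℝ,
      Matrix.mul_smul, ← Finset.smul_sum]
    module
  rw [hsum] at hnonneg
  have h := smul_nonneg (inv_nonneg.2 (zero_le_two (α := ℝ))) hnonneg
  rwa [inv_smul_smul₀ two_ne_zero, sub_nonneg] at h

end IsIsometricResolution

end Pinching

section LocalMeasurement

variable {a b : Type*} [Fintype a]

lemma isHermitian_r2B {M : Matrix (a × b) (a × b) ℂ} (hM : M.IsHermitian) :
    (r2B M).IsHermitian := by
  ext y z
  simp only [r2B, conjTranspose_apply, of_apply, star_sum, hM.apply]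

variable [Fintype b] [DecidableEq b]

variable (b) in
/-- The operator `|u⟩ ⊗ 1`, where `u` is the column of `U` with index `j`. -/
def colIsometry (U : Matrix a a ℂ) (j : a) : Matrix (a × b) b ℂ :=
  (U ⊗ₖ (1 : Matrix b b ℂ)).submatrix id (Prod.mk j)

lemma conjTranspose_colIsometry_mul (U W : Matrix a a ℂ) (i j : a) :
    (colIsometry b U i)ᴴ * colIsometry b W j = (Uᴴ * W) i j • (1 : Matrix b b ℂ) := by
  change ((U ⊗ₖ (1 : Matrix b b ℂ))ᴴ * (W ⊗ₖ (1 : Matrix b b ℂ))).submatrix (Prod.mk i)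
    (Prod.mk j) = _
  rw [conjTranspose_kronecker, ← mul_kronecker_mul, conjTranspose_one, Matrix.one_mul]
  rfl

lemma conjTranspose_colIsometry_mul_mul_apply (U W : Matrix a a ℂ)
    (M : Matrix (a × b) (a × b) ℂ) (i j : a) (y z : b) :
    ((colIsometry b U i)ᴴ * M * colIsometry b W j) y z =
      ∑ l, ∑ k, star (U k i) * M (k, y) (l, z) * W l j := by
  simp [colIsometry, mul_apply, Fintype.sum_prod_type, Matrix.one_apply, Finset.sum_mul, apply_ite]

lemma blockSum_colIsometry_apply (U : Matrix a a ℂ) (A : a → Matrix b b ℂ) (p q : a × b) :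
    blockSum (colIsometry b U) A p q =
      ∑ j, U p.1 j * A j p.2 q.2 * star (U q.1 j) := by
  simp [blockSum, colIsometry, Matrix.sum_apply, mul_apply, Matrix.one_apply, apply_ite]

variable [DecidableEq a]

lemma pinch_colIsometry (U : Matrix a a ℂ) (M : Matrix (a × b) (a × b) ℂ) :
    pinch (colIsometry b U) M = (U ⊗ₖ (1 : Matrix b b ℂ)) *
      dephaseA ((U ⊗ₖ (1 : Matrix b b ℂ))ᴴ * M * (U ⊗ₖ (1 : Matrix b b ℂ))) *
        (U ⊗ₖ (1 : Matrix b b ℂ))ᴴ := by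
  have hblock (j : a) : (colIsometry b U j)ᴴ * M * colIsometry b U j =
      ((U ⊗ₖ (1 : Matrix b b ℂ))ᴴ * M * (U ⊗ₖ (1 : Matrix b b ℂ))).submatrix (Prod.mk j)
        (Prod.mk j) := rfl
  ext p q
  simp only [pinch, hblock]
  generalize (U ⊗ₖ (1 : Matrix b b ℂ))ᴴ * M * (U ⊗ₖ (1 : Matrix b b ℂ)) = N
  simp [blockSum_colIsometry_apply, mul_apply, Fintype.sum_prod_type, Matrix.one_apply, dephaseA,
    apply_ite]

lemma dephaseA_eq_pinch (M : Matrix (a × b) (a × b) ℂ) :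
    dephaseA M = pinch (colIsometry b 1) M := by
  rw [pinch_colIsometry, one_kronecker_one, conjTranspose_one, Matrix.one_mul, Matrix.mul_one,
    Matrix.one_mul, Matrix.mul_one]

lemma blockSum_colIsometry_const {U : Matrix a a ℂ} (hU : U ∈ unitaryGroup a ℂ)
    (N : Matrix b b ℂ) : blockSum (colIsometry b U) (fun _ ↦ N) = 1 ⊗ₖ N := by
  ext p q
  rw [blockSum_colIsometry_apply, kronecker_apply, ← mem_unitaryGroup_iff.1 hU, mul_apply,
    Finset.sum_mul]
  exact Finset.sum_congr rfl fun j _ ↦ mul_right_comm _ _ _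

lemma isIsometricResolution_colIsometry {U : Matrix a a ℂ} (hU : U ∈ unitaryGroup a ℂ) :
    IsIsometricResolution (colIsometry b U) where
  conjTranspose_mul_self i := by
    rw [conjTranspose_colIsometry_mul, ← star_eq_conjTranspose, mem_unitaryGroup_iff'.1 hU,
      Matrix.one_apply_eq, one_smul]
  conjTranspose_mul_of_ne h := by
    rw [conjTranspose_colIsometry_mul, ← star_eq_conjTranspose, mem_unitaryGroup_iff'.1 hU,
      Matrix.one_apply_ne h, zero_smul]
  sum_mul_conjTranspose := by
    simpa only [blockSum, Matrix.mul_one, one_kronecker_one] using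
      blockSum_colIsometry_const hU (1 : Matrix b b ℂ)

lemma sum_conjTranspose_colIsometry_mul_mul {U : Matrix a a ℂ} (hU : U ∈ unitaryGroup a ℂ)
    (M : Matrix (a × b) (a × b) ℂ) :
    ∑ j, (colIsometry b U j)ᴴ * M * colIsometry b U j = r2B M := by
  have hUU (l k : a) : ∑ j, U l j * star (U k j) = (1 : Matrix a a ℂ) l k := by
    rw [← mem_unitaryGroup_iff.1 hU, mul_apply]
    rfl
  ext y z
  calc (∑ j, (colIsometry b U j)ᴴ * M * colIsometry b U j) y z
      = ∑ j, ∑ l, ∑ k, star (U k j) * M (k, y) (l, z) * U l j := by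
        simp only [Matrix.sum_apply, conjTranspose_colIsometry_mul_mul_apply]
    _ = ∑ l, ∑ k, M (k, y) (l, z) * ∑ j, U l j * star (U k j) := by
        rw [Finset.sum_comm]
        refine Finset.sum_congr rfl fun l _ ↦ ?_
        rw [Finset.sum_comm]
        refine Finset.sum_congr rfl fun k _ ↦ ?_
        rw [Finset.mul_sum]
        exact Finset.sum_congr rfl fun j _ ↦ by ring
    _ = r2B M y z := by
        simp only [hUU, Matrix.one_apply, mul_ite, mul_one, mul_zero, Finset.sum_ite_eq,
          Finset.mem_univ, if_true, r2B, of_apply]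

lemma r2B_pinch_colIsometry {U : Matrix a a ℂ} (hU : U ∈ unitaryGroup a ℂ)
    (M : Matrix (a × b) (a × b) ℂ) : r2B (pinch (colIsometry b U) M) = r2B M := by
  simp only [← sum_conjTranspose_colIsometry_mul_mul hU, pinch,
    (isIsometricResolution_colIsometry hU).conjTranspose_mul_blockSum_mul]

lemma relEnt_one_kronecker_r2B {M : Matrix (a × b) (a × b) ℂ} (hM : M.IsHermitian) :
    relEnt M (1 ⊗ₖ r2B M) = vN (r2B M) - vN M := by
  have hU : (1 : Matrix a a ℂ) ∈ unitaryGroup a ℂ := one_mem _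
  have hlog : (M * mlog (1 ⊗ₖ r2B M)).trace = (r2B M * mlog (r2B M)).trace := by
    rw [← blockSum_colIsometry_const hU, (isIsometricResolution_colIsometry hU).mlog_blockSum
      fun _ ↦ isHermitian_r2B hM, trace_mul_blockSum, ← trace_sum, ← Finset.sum_mul,
      sum_conjTranspose_colIsometry_mul_mul hU]
  rw [vN_eq_neg_re_trace_mul_mlog hM, vN_eq_neg_re_trace_mul_mlog (isHermitian_r2B hM), relEnt,
    Matrix.mul_sub, trace_sub, Complex.sub_re, hlog]
  ring

lemma pinch_pinch_le_smul_one_kronecker_r2B {U W : Matrix a a ℂ} (hU : U ∈ unitaryGroup a ℂ)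
    (hW : W ∈ unitaryGroup a ℂ) {c : ℝ} (hc : ∀ i j, Complex.normSq ((Wᴴ * U) i j) ≤ c)
    {M : Matrix (a × b) (a × b) ℂ} (hM : M.PosSemidef) :
    pinch (colIsometry b W) (pinch (colIsometry b U) M) ≤ c • (1 ⊗ₖ r2B M) := by
  have hblock (i j : a) : (colIsometry b W i)ᴴ *
      (colIsometry b U j * ((colIsometry b U j)ᴴ * M * colIsometry b U j) *
        (colIsometry b U j)ᴴ) * colIsometry b W i =
      Complex.normSq ((Wᴴ * U) i j) • ((colIsometry b U j)ᴴ * M * colIsometry b U j) := by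
    have hstar : (Uᴴ * W) j i = star ((Wᴴ * U) i j) := by
      rw [← conjTranspose_apply, conjTranspose_mul, conjTranspose_conjTranspose]
    calc _ = ((colIsometry b W i)ᴴ * colIsometry b U j) *
          ((colIsometry b U j)ᴴ * M * colIsometry b U j) *
            ((colIsometry b U j)ᴴ * colIsometry b W i) := by simp only [Matrix.mul_assoc]
      _ = _ := by
        rw [conjTranspose_colIsometry_mul, conjTranspose_colIsometry_mul, hstar, Matrix.smul_mul,
          Matrix.one_mul, Matrix.mul_smul, Matrix.mul_one, smul_smul,
          ← Complex.coe_smul, Complex.normSq_eq_conj_mul_self]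
        rfl
  rw [← kronecker_smul, ← blockSum_colIsometry_const hW, pinch]
  refine blockSum_mono _ fun i ↦ ?_
  rw [pinch, blockSum, Matrix.mul_sum, Matrix.sum_mul,
    ← sum_conjTranspose_colIsometry_mul_mul hU, Finset.smul_sum]
  refine Finset.sum_le_sum fun j _ ↦ ?_
  rw [hblock]
  exact smul_le_smul_of_nonneg_right (hc i j) (hM.conjTranspose_mul_mul_same _).nonneg

end LocalMeasurement

section EntropicUncertainty

variable {a b : Type*} [Fintype a] [DecidableEq a] [Fintype b] [DecidableEq b]

theorem vN_r2B_sub_vN_pinch_le {U W : Matrix a a ℂ} (hU : U ∈ unitaryGroup a ℂ)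
    (hW : W ∈ unitaryGroup a ℂ) {c : ℝ} (hc : 0 < c)
    (hUW : ∀ i j, Complex.normSq ((Wᴴ * U) i j) ≤ c)
    {ρ : Matrix (a × b) (a × b) ℂ} (hρ : ρ.PosSemidef) :
    vN (r2B ρ) - vN (pinch (colIsometry b W) ρ) - ρ.trace.re * Real.logb 2 c ≤
      vN (pinch (colIsometry b U) ρ) - vN ρ := by
  have hVU := isIsometricResolution_colIsometry (b := b) hU
  have hVW := isIsometricResolution_colIsometry (b := b) hW
  set ρU := pinch (colIsometry b U) ρ
  set ρW := pinch (colIsometry b W) ρ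
  have hρW_pos : ρW.PosSemidef := posSemidef_pinch _ hρ
  have hoverlap : pinch (colIsometry b W) ρU ≤ c • (1 ⊗ₖ r2B ρ) :=
    pinch_pinch_le_smul_one_kronecker_r2B hU hW hUW hρ
  have hdom : ρ ≤ (Fintype.card a : ℝ) • ρU := hVU.le_card_smul_pinch hρ
  have hdomW : ρW ≤ (Fintype.card a : ℝ) • pinch (colIsometry b W) ρU := by
    rw [← pinch_smul]
    exact pinch_mono _ hdom
  have hdom' : ρW ≤ (Fintype.card a * c : ℝ) • (1 ⊗ₖ r2B ρ) := by
    rw [mul_smul]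
    exact hdomW.trans (smul_le_smul_of_nonneg_left hoverlap (Nat.cast_nonneg _))
  have hr2B : r2B ρW = r2B ρ := r2B_pinch_colIsometry hW ρ
  have hherm : ((1 : Matrix a a ℂ) ⊗ₖ r2B ρ).IsHermitian := by
    rw [← blockSum_colIsometry_const hW]
    exact isHermitian_blockSum _ fun _ ↦ isHermitian_r2B hρ.1
  calc vN (r2B ρ) - vN ρW - ρ.trace.re * Real.logb 2 c
      = relEnt ρW (c • (1 ⊗ₖ r2B ρ)) := by
        rw [relEnt_smul_right hρW_pos hherm hdom' hc, hVW.trace_pinch, ← hr2B,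
          relEnt_one_kronecker_r2B hρW_pos.1]
    _ ≤ relEnt ρW (pinch (colIsometry b W) ρU) :=
        relEnt_anti_right hρW_pos (posSemidef_pinch _ (posSemidef_pinch _ hρ))
          (Nat.cast_nonneg _) hdomW hoverlap
    _ ≤ relEnt ρ ρU := hVW.relEnt_pinch_le hρ (posSemidef_pinch _ hρ) hdom
    _ = vN ρU - vN ρ := hVU.relEnt_self_pinch hρ.1

end EntropicUncertainty

section Purification

variable {a b e : Type*} [Fintype b]

lemma posSemidef_rAE [Finite a] [Finite e] (ψ : a × b × e → ℂ) :
    (rAE (vecMulVec ψ (star ψ))).PosSemidef :=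
  posSemidef_self_mul_conjTranspose (of fun (p : a × e) (y : b) ↦ ψ (p.1, y, p.2))

variable [Fintype a] [Fintype e]

lemma trace_rAE (ψ : a × b × e → ℂ) :
    (rAE (vecMulVec ψ (star ψ))).trace = ∑ p, (Complex.normSq (ψ p) : ℂ) := by
  simp only [trace, diag_apply, rAE, of_apply, vecMulVec_apply, Pi.star_apply,
    Fintype.sum_prod_type, ← Complex.mul_conj]
  exact Finset.sum_congr rfl fun _ _ ↦ Finset.sum_comm

/-- The unnormalised state vector on `B ⊗ E`, written as a matrix, that remains when the system
`A` of `ψ` is found in the column of `U` with index `j`. -/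
def residualVector (U : Matrix a a ℂ) (ψ : a × b × e → ℂ) (j : a) : Matrix b e ℂ :=
  of fun y x ↦ ∑ k, star (U k j) * ψ (k, y, x)

variable [DecidableEq b]

lemma conjTranspose_colIsometry_mul_rAB_mul (U : Matrix a a ℂ) (ψ : a × b × e → ℂ) (j : a) :
    (colIsometry b U j)ᴴ * rAB (vecMulVec ψ (star ψ)) * colIsometry b U j =
      residualVector U ψ j * (residualVector U ψ j)ᴴ := by
  ext y z
  rw [conjTranspose_colIsometry_mul_mul_apply]
  simp only [rAB, residualVector, mul_apply, conjTranspose_apply, of_apply, vecMulVec_apply,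
    Pi.star_apply, star_sum, star_mul', star_star, Finset.mul_sum, Finset.sum_mul]
  rw [Finset.sum_comm (γ := e)]
  refine Finset.sum_congr rfl fun l _ ↦ ?_
  rw [Finset.sum_comm]
  exact Finset.sum_congr rfl fun x _ ↦ Finset.sum_congr rfl fun k _ ↦ by ring

variable [DecidableEq a]

lemma vN_pinch_rAB {U : Matrix a a ℂ} (hU : U ∈ unitaryGroup a ℂ) (ψ : a × b × e → ℂ) :
    vN (pinch (colIsometry b U) (rAB (vecMulVec ψ (star ψ)))) =
      ∑ j, vN (residualVector U ψ j * (residualVector U ψ j)ᴴ) := by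
  simp only [pinch, conjTranspose_colIsometry_mul_rAB_mul]
  exact (isIsometricResolution_colIsometry hU).vN_blockSum fun j ↦
    isHermitian_mul_conjTranspose_self _

variable [DecidableEq e]

lemma vN_pinch_rAB_eq_vN_pinch_rAE {U : Matrix a a ℂ} (hU : U ∈ unitaryGroup a ℂ)
    (ψ : a × b × e → ℂ) :
    vN (pinch (colIsometry b U) (rAB (vecMulVec ψ (star ψ)))) =
      vN (pinch (colIsometry e U) (rAE (vecMulVec ψ (star ψ)))) := by
  let φ : a × e × b → ℂ := fun p ↦ ψ (p.1, p.2.2, p.2.1)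
  have hφ (j : a) : residualVector U φ j = (residualVector U ψ j)ᵀ := rfl
  have hrAE : rAE (vecMulVec ψ (star ψ)) = rAB (vecMulVec φ (star φ)) := rfl
  rw [hrAE, vN_pinch_rAB hU, vN_pinch_rAB hU]
  refine Finset.sum_congr rfl fun j _ ↦ ?_
  have htranspose (A : Matrix b e ℂ) : Aᵀ * Aᵀᴴ = (Aᴴ * A)ᵀ := (transpose_mul _ _).symm
  rw [hφ, htranspose, vN_transpose (isHermitian_conjTranspose_mul_self _),
    vN_mul_conjTranspose_self]

lemma vN_rAE_eq_vN_rB (ψ : a × b × e → ℂ) :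
    vN (rAE (vecMulVec ψ (star ψ))) = vN (rB (vecMulVec ψ (star ψ))) := by
  let M : Matrix (a × e) b ℂ := of fun p y ↦ ψ (p.1, y, p.2)
  have hrAE : rAE (vecMulVec ψ (star ψ)) = M * Mᴴ := rfl
  have hrB : rB (vecMulVec ψ (star ψ)) = (Mᴴ * M)ᵀ := by
    ext y z
    simp [rB, M, vecMulVec_apply, mul_apply, Fintype.sum_prod_type, mul_comm]
  rw [hrAE, hrB, vN_transpose (isHermitian_conjTranspose_mul_self M), vN_mul_conjTranspose_self]

end Purification

section Fourier

lemma dephaseXA_eq_pinch (d : ℕ) {b : Type*} [Fintype b] [DecidableEq b]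
    (M : Matrix (Fin d × b) (Fin d × b) ℂ) :
    dephaseXA d M = pinch (colIsometry b (fourierMat d)) M :=
  (pinch_colIsometry _ M).symm

variable (d : ℕ) [NeZero d]

lemma isPrimitiveRoot_qomega : IsPrimitiveRoot (qomega d) d :=
  Complex.isPrimitiveRoot_exp d (NeZero.ne d)

lemma norm_qomega : ‖qomega d‖ = 1 :=
  (isPrimitiveRoot_qomega d).norm'_eq_one (NeZero.ne d)

lemma normSq_fourierMat_apply (k j : Fin d) : Complex.normSq (fourierMat d k j) = (d : ℝ)⁻¹ := by
  simp [Complex.normSq_eq_norm_sq, fourierMat, norm_qomega]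

lemma fourierMat_mem_unitaryGroup : fourierMat d ∈ unitaryGroup (Fin d) ℂ := by
  rw [mem_unitaryGroup_iff']
  ext j l
  set z : ℂ := qomega d ^ (l : ℕ) / qomega d ^ (j : ℕ) with hz
  have hq : qomega d ^ (j : ℕ) ≠ 0 :=
    pow_ne_zero _ ((isPrimitiveRoot_qomega d).ne_zero (NeZero.ne d))
  have hterm (k : Fin d) : star (fourierMat d k j) * fourierMat d k l = z ^ (k : ℕ) / d := by
    have hd : (√d : ℂ) * √d = d := by
      rw [← Complex.ofReal_mul, Real.mul_self_sqrt d.cast_nonneg, Complex.ofReal_natCast]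
    have hstar : star (qomega d) = (qomega d)⁻¹ := (Complex.inv_eq_conj (norm_qomega d)).symm
    simp only [fourierMat, of_apply, star_div₀, star_pow, hstar, Complex.star_def,
      Complex.conj_ofReal, hz, pow_mul, div_mul_div_comm, hd, div_pow, inv_pow]
    rw [mul_comm, div_eq_mul_inv (_ ^ _ : ℂ)]
  have hsum : (star (fourierMat d) * fourierMat d) j l = (∑ k ∈ Finset.range d, z ^ k) / d := by
    rw [← Fin.sum_univ_eq_sum_range (fun k ↦ z ^ k), Finset.sum_div]
    exact (mul_apply ..).trans (Finset.sum_congr rfl fun k _ ↦ hterm k)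
  rw [hsum]
  obtain rfl | hjl := eq_or_ne j l
  · simp [hz, div_self hq, NeZero.ne d]
  · have hz1 : z ≠ 1 := fun h ↦ hjl <| Fin.ext <|
      (isPrimitiveRoot_qomega d).pow_inj j.2 l.2 ((div_eq_one_iff_eq hq).1 h).symm
    have hzd : z ^ d = 1 := by
      rw [hz, div_pow, ← pow_mul', ← pow_mul', pow_mul, pow_mul,
        (isPrimitiveRoot_qomega d).pow_eq_one, one_pow, one_pow, div_one]
    rw [geom_sum_eq hz1, hzd, sub_self, zero_div, zero_div, Matrix.one_apply_ne hjl]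

end Fourier

theorem strong_CIT_pure_general {a b e : Type*} [Fintype a] [DecidableEq a]
    [Fintype b] [DecidableEq b] [Fintype e] [DecidableEq e] {U W : Matrix a a ℂ}
    (hU : U ∈ unitaryGroup a ℂ) (hW : W ∈ unitaryGroup a ℂ) {c : ℝ} (hc : 0 < c)
    (hUW : ∀ i j, Complex.normSq ((Wᴴ * U) i j) ≤ c)
    (ψ : a × b × e → ℂ) (hψ : ∑ p, Complex.normSq (ψ p) = 1) :
    -Real.logb 2 c ≤
      (vN (pinch (colIsometry b U) (rAB (vecMulVec ψ (star ψ)))) -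
        vN (rB (vecMulVec ψ (star ψ)))) +
      (vN (pinch (colIsometry e W) (rAE (vecMulVec ψ (star ψ)))) -
        vN (rE (vecMulVec ψ (star ψ)))) := by
  have h := vN_r2B_sub_vN_pinch_le hU hW hc hUW (posSemidef_rAE ψ)
  have htrace : (rAE (vecMulVec ψ (star ψ))).trace.re = 1 := by
    rw [trace_rAE, ← Complex.ofReal_sum, hψ, Complex.ofReal_re]
  have hrE : r2B (rAE (vecMulVec ψ (star ψ))) = rE (vecMulVec ψ (star ψ)) := rfl
  rw [← vN_pinch_rAB_eq_vN_pinch_rAE hU, vN_rAE_eq_vN_rB, htrace, hrE] at h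
  linarith

/-- strong complementary information tradeoff for pure states:
S(X^A|B)_ρ + S(Z^A|E)_ρ ≥ log₂ d. -/
theorem strong_CIT_pure (d : ℕ) [NeZero d]
    {b e : Type*} [Fintype b] [DecidableEq b] [Fintype e] [DecidableEq e]
    (ψ : Fin d × b × e → ℂ) (hψ : ∑ p, Complex.normSq (ψ p) = 1) :
    (fun ρ : Matrix (Fin d × b × e) (Fin d × b × e) ℂ =>
      (vN (dephaseXA d (rAB ρ)) - vN (rB ρ)) + (vN (dephaseA (rAE ρ)) - vN (rE ρ))
        ≥ Real.logb 2 d)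
      (Matrix.of fun p q => ψ p * star (ψ q)) := by
  have hoverlap (i j : Fin d) :
      Complex.normSq (((1 : Matrix (Fin d) (Fin d) ℂ)ᴴ * fourierMat d) i j) ≤ (d : ℝ)⁻¹ := by
    rw [conjTranspose_one, Matrix.one_mul, normSq_fourierMat_apply]
  have h := strong_CIT_pure_general (fourierMat_mem_unitaryGroup d) (one_mem _)
    (inv_pos.2 (Nat.cast_pos.2 (NeZero.pos d))) hoverlap ψ hψ
  rwa [← dephaseXA_eq_pinch d, ← dephaseA_eq_pinch, Real.logb_inv, neg_neg] at h
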